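/- For any orthogonal matrix P ∈ O(n), the set Q_P = {A ∈ S_n : PA + AP = 0} is a linear subspace of the space of n×n real symmetric matrices consisting entirely of austere matrices. -/

import Mathlib

open Matrix

/-- Odd powers of a matrix that anticommutes with an invertible matrix are traceless. -/
theorem Matrix.trace_pow_eq_zero_of_anticommute {ι : Type*} [Fintype ι] [DecidableEq ι]
    {P R A : Matrix ι ι ℝ} (hP : R * P = 1) (h : P * A + A * P = 0) {m : ℕ} (hm : Odd m) :
    (A ^ m).trace = 0 := by
  have hs : SemiconjBy P A (-A) := by
    rw [SemiconjBy, neg_mul]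
    exact eq_neg_of_add_eq_zero_left h
  have hpow : P * A ^ m = -A ^ m * P := by
    rw [(hs.pow_right m).eq, hm.neg_pow]
  have htr : (A ^ m).trace = -(A ^ m).trace := by
    calc (A ^ m).trace = (R * (P * A ^ m)).trace := by rw [← mul_assoc, hP, one_mul]
      _ = (-A ^ m * (P * R)).trace := by rw [hpow, trace_mul_comm, mul_assoc]
      _ = -(A ^ m).trace := by rw [mul_eq_one_comm.mp hP, mul_one, trace_neg]
  linarith

theorem anticommutant_is_austere_subspace {n : ℕ} (P : Matrix (Fin n) (Fin n) ℝ)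
    (hP : Pᵀ * P = 1) :
    ∃ Q : Submodule ℝ (Matrix (Fin n) (Fin n) ℝ),
      (Q : Set (Matrix (Fin n) (Fin n) ℝ))
          = {A | A.IsSymm ∧ P * A + A * P = 0} ∧
      ∀ A ∈ Q, ∀ k : ℕ, (A ^ (2 * k + 1)).trace = 0 := by
  refine ⟨{ carrier := {A | A.IsSymm ∧ P * A + A * P = 0}
            zero_mem' := ⟨isSymm_zero, by simp⟩
            add_mem' := ?_
            smul_mem' := ?_ }, rfl, ?_⟩
  · rintro A B ⟨hA, hPA⟩ ⟨hB, hPB⟩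
    refine ⟨hA.add hB, ?_⟩
    rw [mul_add, add_mul, add_add_add_comm, hPA, hPB, add_zero]
  · rintro c A ⟨hA, hPA⟩
    refine ⟨hA.smul c, ?_⟩
    rw [mul_smul_comm, smul_mul_assoc, ← smul_add, hPA, smul_zero]
  · rintro A ⟨-, hPA⟩ k
    exact trace_pow_eq_zero_of_anticommute hP hPA (odd_two_mul_add_one k)
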